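/- For x, y ∈ A* and a ∈ A, the queue actions [x̄ y a] and [x̄ a y] are related by the reflexive-transitive closure of the transposition relation ∼ on Q (where p ∼ q iff p = rs and q = sr for some r, s ∈ Q). -/

import Mathlib

/-- A basic queue action: write a letter or read a letter. -/
inductive Act (A : Type) : Type
  | wr (a : A)
  | rd (a : A)
deriving DecidableEq

variable {A : Type} [DecidableEq A]

/-- The action of words over `Act A` on queue states `A* ∪ {⊥}` (⊥ = `none`). -/
def act : Option (List A) → List (Act A) → Option (List A)
  | q, [] => q
  | none, _ :: _ => none
  | some q, (Act.wr a) :: u => act (some (q ++ [a])) u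
  | some q, (Act.rd a) :: u =>
    match q with
    | [] => none
    | b :: q' => if b = a then act (some q') u else none

/-- Two words over `Act A` are equivalent if they act identically on all queues. -/
def qequiv (u v : List (Act A)) : Prop := ∀ q : List A, act (some q) u = act (some q) v

/-- Writing the word `w`. -/
def W (w : List A) : List (Act A) := w.map Act.wr

/-- Reading the word `w` (the barred copy of `w`). -/
def R (w : List A) : List (Act A) := w.map Act.rd

/-- `shuffle s` is the word `s₁ s̄₁ s₂ s̄₂ … sₖ s̄ₖ`. -/
def shuffle (s : List A) : List (Act A) := s.flatMap fun a => [Act.wr a, Act.rd a]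

/-- The projection to write letters. -/
def prW (w : List (Act A)) : List A :=
  w.filterMap fun x => match x with | Act.wr a => some a | Act.rd _ => none

/-- The projection to read letters (with the bars removed). -/
def prR (w : List (Act A)) : List A :=
  w.filterMap fun x => match x with | Act.wr _ => none | Act.rd a => some a

theorem act_append (u v : List (Act A)) : ∀ q, act q (u ++ v) = act (act q u) v := by
  induction u with
  | nil =>
      intro q
      cases q <;> rfl
  | cons x u ih =>
      intro q
      cases q with
      | none =>
          simp only [List.cons_append, act]
          cases v with
          | nil => rfl
          | cons _ _ => rfl
      | some q =>
          cases x with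
          | wr a => simpa [act] using ih _
          | rd a =>
              cases q with
              | nil =>
                  simp only [List.cons_append, act]
                  cases v with
                  | nil => rfl
                  | cons _ _ => rfl
              | cons b q' =>
                  by_cases h : b = a
                  · simp [List.cons_append, act, h, ih]
                  · simp only [List.cons_append, act, if_neg h]
                    cases v with
                    | nil => rfl
                    | cons _ _ => rfl

/-- The setoid of queue-action equivalence. -/
def qsetoid (A : Type) [DecidableEq A] : Setoid (List (Act A)) :=
  ⟨qequiv, ⟨fun _ _ => rfl, fun h q => (h q).symm, fun h1 h2 q => (h1 q).trans (h2 q)⟩⟩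

/-- The monoid of queue actions. -/
def QAct (A : Type) [DecidableEq A] : Type := Quotient (qsetoid A)

theorem act_none : ∀ v : List (Act A), act (none : Option (List A)) v = none
  | [] => rfl
  | _ :: _ => rfl

theorem qequiv_append {u u' v v' : List (Act A)} (hu : qequiv u u') (hv : qequiv v v') :
    qequiv (u ++ v) (u' ++ v') := by
  intro q
  rw [act_append, act_append, hu q]
  cases h : act (some q) u' with
  | none => rw [act_none, act_none]
  | some q' => exact hv q'

instance : Monoid (QAct A) where
  mul := Quotient.map₂ (· ++ ·) (fun _ _ hu _ _ hv => qequiv_append hu hv)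
  one := Quotient.mk (qsetoid A) []
  mul_assoc := by
    rintro ⟨u⟩ ⟨v⟩ ⟨w⟩
    exact congrArg (Quotient.mk (qsetoid A)) (List.append_assoc u v w)
  one_mul := by
    rintro ⟨u⟩
    rfl
  mul_one := by
    rintro ⟨u⟩
    exact congrArg (Quotient.mk (qsetoid A)) (List.append_nil u)

/-- The class of a word in the monoid of queue actions. -/
def cls (w : List (Act A)) : QAct A := Quotient.mk (qsetoid A) w

theorem cls_mul (u v : List (Act A)) : cls u * cls v = cls (u ++ v) := rfl

/-- Words whose queue actions are related by the transitive closure of transposition. -/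
def Conj (u v : List (Act A)) : Prop :=
  Relation.ReflTransGen (fun p q : QAct A => ∃ r s : QAct A, p = r * s ∧ q = s * r) (cls u) (cls v)

theorem Conj.refl (u : List (Act A)) : Conj u u := Relation.ReflTransGen.refl

theorem Conj.trans {u v w : List (Act A)} (h : Conj u v) (h' : Conj v w) : Conj u w :=
  Relation.ReflTransGen.trans h h'

theorem Conj.symm {u v : List (Act A)} (h : Conj u v) : Conj v u :=
  Relation.ReflTransGen.mono (fun _ _ ⟨r, s, hp, hq⟩ => ⟨s, r, hq, hp⟩) _ _
    (Relation.reflTransGen_swap.2 h)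

theorem Conj.swap (u v : List (Act A)) : Conj (u ++ v) (v ++ u) :=
  Relation.ReflTransGen.single ⟨cls u, cls v, rfl, rfl⟩

theorem Conj.of_qequiv {u v : List (Act A)} (h : qequiv u v) : Conj u v := by
  have : cls u = cls v := Quotient.sound h
  unfold Conj
  rw [this]

theorem qequiv_refl (u : List (Act A)) : qequiv u u := fun _ => rfl

theorem W_append {B : Type} (u v : List B) : W (u ++ v) = W u ++ W v := List.map_append

theorem R_append {B : Type} (u v : List B) : R (u ++ v) = R u ++ R v := List.map_append

theorem act_W (v q : List A) : act (some q) (W v) = some (q ++ v) := by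
  induction v generalizing q with
  | nil => simp [W, act]
  | cons c v ih =>
    have := ih (q ++ [c])
    simpa [W, act] using this

theorem act_R_eq_some_iff (x q p : List A) : act (some q) (R x) = some p ↔ q = x ++ p := by
  induction x generalizing q with
  | nil => simp [R, act]
  | cons c x ih =>
    cases q with
    | nil => simp [R, act]
    | cons d q =>
      have := ih q
      by_cases h : d = c
      · simpa [R, act, h] using this
      · simp [R, act, h]

theorem act_append_eq_some_iff (u v : List (Act A)) (q p : List A) :
    act (some q) (u ++ v) = some p ↔ ∃ m, act (some q) u = some m ∧ act (some m) v = some p := by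
  rw [act_append]
  cases act (some q) u with
  | none => simp [act_none]
  | some m => simp

theorem qequiv_iff (u v : List (Act A)) :
    qequiv u v ↔ ∀ q p, act (some q) u = some p ↔ act (some q) v = some p :=
  forall_congr' fun _ => Option.ext_iff

/-- Writing `v` commutes with reading `x` if no nonempty prefix of `v` is a suffix of `x`. -/
theorem qequiv_W_R_comm {v x : List A} (h : ∀ s, s <+: v → s <:+ x → s = []) :
    qequiv (W v ++ R x) (R x ++ W v) := by
  rw [qequiv_iff]
  intro q p
  simp only [act_append_eq_some_iff, act_W, act_R_eq_some_iff, Option.some.injEq,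
    exists_eq_left']
  constructor
  · intro e
    rcases List.append_eq_append_iff.1 e with ⟨s, hx, hv⟩ | ⟨s, hq, hp⟩
    · obtain rfl := h s ⟨p, hv.symm⟩ ⟨q, hx.symm⟩
      exact ⟨[], by simpa using hx.symm, by simpa using hv⟩
    · exact ⟨s, hq, hp.symm⟩
  · rintro ⟨m, rfl, rfl⟩
    simp

theorem qequiv_W_singleton_R_comm {a b : A} (hab : b ≠ a) (u : List A) :
    qequiv (W [a] ++ R (u ++ [b])) (R (u ++ [b]) ++ W [a]) := by
  refine qequiv_W_R_comm fun s hs hs' => ?_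
  rcases List.prefix_cons_iff.1 hs with rfl | ⟨t, rfl, ht⟩
  · rfl
  · obtain rfl := List.prefix_nil.1 ht
    obtain ⟨r, hr⟩ := hs'
    exact absurd (List.append_inj' hr rfl).2 (by simpa using hab.symm)

theorem qequiv_W_cons_R_comm {b : A} {x : List A} (hb : b ∉ x) (v : List A) :
    qequiv (W (b :: v) ++ R x) (R x ++ W (b :: v)) := by
  refine qequiv_W_R_comm fun s hs hs' => ?_
  rcases List.prefix_cons_iff.1 hs with rfl | ⟨t, rfl, -⟩
  · rfl
  · exact absurd (hs'.subset List.mem_cons_self) hb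

/-- Rotating a block of writes that commutes with the reads. -/
theorem conj_rotate_of_comm {x v : List A} (h : qequiv (W v ++ R x) (R x ++ W v)) (u : List A) :
    Conj (R x ++ W (u ++ v)) (R x ++ W (v ++ u)) := by
  rw [W_append, W_append, ← List.append_assoc, ← List.append_assoc]
  refine (Conj.swap _ _).trans (Conj.of_qequiv ?_)
  rw [← List.append_assoc]
  exact qequiv_append h (qequiv_refl _)

/-- Rotating a written `a` when the reads are `u b aⁿ` with `b ≠ a`, unless `u b` is a prefix of
the remaining writes. -/
theorem conj_rotate_write {a b : A} (hab : b ≠ a) (u y : List A) (n : ℕ)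
    (h : ¬ (u ++ [b]) <+: y) :
    Conj (R (u ++ [b] ++ List.replicate n a) ++ W (y ++ [a]))
      (R (u ++ [b] ++ List.replicate n a) ++ W ([a] ++ y)) := by
  set s := u ++ [b]
  set t := List.replicate n a
  have swap_left : Conj (R (s ++ t) ++ W (y ++ [a])) (R t ++ W y ++ (W [a] ++ R s)) := by
    have := Conj.swap (R s) (R t ++ W (y ++ [a]))
    simpa [R_append, W_append] using this
  have comm_last : Conj (R t ++ W y ++ (W [a] ++ R s)) (R t ++ W y ++ (R s ++ W [a])) :=
    Conj.of_qequiv (qequiv_append (qequiv_refl _) (qequiv_W_singleton_R_comm hab u))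
  have swap_last : Conj (R t ++ W y ++ (R s ++ W [a])) (W [a] ++ (R t ++ (W y ++ R s))) := by
    have := Conj.swap (R t ++ W y ++ R s) (W [a])
    simpa using this
  have comm_run : Conj (W [a] ++ (R t ++ (W y ++ R s))) (R t ++ (W [a] ++ (W y ++ R s))) := by
    refine Conj.of_qequiv ((qequiv_iff _ _).2 fun q p => ?_)
    simp only [act_append_eq_some_iff, act_W, act_R_eq_some_iff, Option.some.injEq,
      exists_eq_left']
    constructor
    · rintro ⟨m, e, hm⟩
      rcases List.append_eq_append_iff.1 e with ⟨r, hr, hv⟩ | ⟨r, hq, hp⟩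
      · cases m with
        | nil => exact absurd ⟨p, by simpa using hm.symm⟩ h
        | cons c m =>
          obtain ⟨rfl, hc⟩ : r = [] ∧ [a] = c :: m := by
            cases r with
            | nil => simpa using hv
            | cons => simp at hv
          exact ⟨[], by simpa using hr.symm, by simpa [← hc] using hm⟩
      · exact ⟨r, hq, by rw [← hp, hm]⟩
    · rintro ⟨m, rfl, hm⟩
      exact ⟨m ++ [a], by simp, hm⟩
  have swap_right : Conj (R t ++ (W [a] ++ (W y ++ R s))) (R (s ++ t) ++ W ([a] ++ y)) := by
    have := Conj.swap (R t ++ W [a] ++ W y) (R s)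
    simpa only [R_append, W_append, List.append_assoc] using this
  exact swap_left.trans <| comm_last.trans <| swap_last.trans <| comm_run.trans swap_right

/-- Rotating a read `a` when the writes are `aᵏ d t` with `d ≠ a`, unless `d t` is a suffix of the
remaining reads. -/
theorem conj_rotate_read {a d : A} (hd : d ≠ a) (k : ℕ) (t y : List A) (h : ¬ (d :: t) <:+ y) :
    Conj (R ([a] ++ y) ++ W (List.replicate k a ++ d :: t))
      (R (y ++ [a]) ++ W (List.replicate k a ++ d :: t)) := by
  set s := d :: t
  set r := List.replicate k a
  have swap_left : Conj (R ([a] ++ y) ++ W (r ++ s)) (W s ++ R [a] ++ (R y ++ W r)) := by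
    have := Conj.swap (R ([a] ++ y) ++ W r) (W s)
    simpa only [R_append, W_append, List.append_assoc] using this
  have comm_first : Conj (W s ++ R [a] ++ (R y ++ W r)) (R [a] ++ W s ++ (R y ++ W r)) :=
    Conj.of_qequiv
      (qequiv_append (qequiv_W_cons_R_comm (by simpa using hd) t) (qequiv_refl _))
  have swap_first : Conj (R [a] ++ W s ++ (R y ++ W r)) (W s ++ (R y ++ (W r ++ R [a]))) := by
    have := Conj.swap (R [a]) (W s ++ R y ++ W r)
    simpa using this
  have comm_run : Conj (W s ++ (R y ++ (W r ++ R [a]))) (W s ++ (R y ++ (R [a] ++ W r))) := by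
    refine Conj.of_qequiv ((qequiv_iff _ _).2 fun q p => ?_)
    simp only [act_append_eq_some_iff, act_W, act_R_eq_some_iff, Option.some.injEq,
      exists_eq_left']
    refine exists_congr fun m => and_congr_right fun e => ?_
    cases m with
    | nil => exact absurd ⟨q, by simpa using e⟩ h
    | cons c m => simp [eq_comm]
  have swap_right : Conj (W s ++ (R y ++ (R [a] ++ W r))) (R (y ++ [a]) ++ W (r ++ s)) := by
    have := Conj.swap (W s) (R y ++ R [a] ++ W r)
    simpa [R_append, W_append] using this
  exact swap_left.trans <| comm_first.trans <| swap_first.trans <| comm_run.trans swap_right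

theorem eq_replicate_or_exists_first_ne (a : A) (y : List A) :
    (∃ k, y = List.replicate k a) ∨ ∃ k d t, d ≠ a ∧ y = List.replicate k a ++ d :: t := by
  induction y with
  | nil => exact .inl ⟨0, rfl⟩
  | cons c y ih =>
    by_cases hc : c = a
    · subst hc
      rcases ih with ⟨k, rfl⟩ | ⟨k, d, t, hd, rfl⟩
      · exact .inl ⟨k + 1, rfl⟩
      · exact .inr ⟨k + 1, d, t, hd, rfl⟩
    · exact .inr ⟨0, c, y, hc, rfl⟩

theorem eq_replicate_or_exists_last_ne (a : A) (x : List A) :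
    (∃ n, x = List.replicate n a) ∨ ∃ u b n, b ≠ a ∧ x = u ++ [b] ++ List.replicate n a := by
  rcases eq_replicate_or_exists_first_ne a x.reverse with ⟨n, h⟩ | ⟨n, b, t, hb, h⟩
  · exact .inl ⟨n, by simpa using congrArg List.reverse h⟩
  · exact .inr ⟨t.reverse, b, n, hb, by simpa using congrArg List.reverse h⟩

/-- The case where only `a` is read. -/
theorem conj_rotate_of_replicate (a : A) (n : ℕ) (y : List A) :
    Conj (R (List.replicate n a) ++ W (y ++ [a])) (R (List.replicate n a) ++ W ([a] ++ y)) := by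
  rcases eq_replicate_or_exists_first_ne a y with ⟨k, rfl⟩ | ⟨k, d, t, hd, rfl⟩
  · rw [← List.replicate_succ', List.singleton_append, ← List.replicate_succ]
    exact Conj.refl _
  · have hmem : d ∉ List.replicate n a := fun h => hd (List.eq_of_mem_replicate h)
    have left := conj_rotate_of_comm (qequiv_W_cons_R_comm hmem (t ++ [a])) (List.replicate k a)
    have right := conj_rotate_of_comm (qequiv_W_cons_R_comm hmem t) (List.replicate (k + 1) a)
    have e : d :: t ++ List.replicate (k + 1) a = d :: (t ++ [a]) ++ List.replicate k a := by
      simp [List.replicate_succ]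
    rw [e] at right
    simpa [List.replicate_succ] using left.trans right.symm

/-- The case where the reads and the writes are both `u b` followed by a power of `a`. -/
theorem conj_rotate_of_replicate_tails {a b : A} (hab : b ≠ a) (u : List A) (n j : ℕ) :
    Conj (R (u ++ [b] ++ List.replicate (n + 1) a) ++ W (u ++ [b] ++ List.replicate j a ++ [a]))
      (R (u ++ [b] ++ List.replicate (n + 1) a) ++ W ([a] ++ (u ++ [b] ++ List.replicate j a))) := by
  set x := u ++ [b] ++ List.replicate (n + 1) a with hx
  set y := u ++ [b] ++ List.replicate j a with hy
  have key : ∀ v₂ v₁, [a] ++ y = v₁ ++ v₂ →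
      Conj (R x ++ W ([a] ++ y)) (R x ++ W (v₂ ++ v₁)) ∨
        Conj (R x ++ W ([a] ++ y)) (R x ++ W (y ++ [a])) := by
    intro v₂
    induction v₂ with
    | nil =>
      intro v₁ h
      left
      rw [h]
      simpa using Conj.refl _
    | cons c v₂ ih =>
      intro v₁ h
      rcases ih (v₁ ++ [c]) (by simpa using h) with h' | h'
      · by_cases hfail : c = a ∧ (u ++ [b]) <+: v₂ ++ v₁
        · obtain ⟨rfl, z, hz⟩ := hfail
          right
          have hperm : (u ++ [b] ++ z).Perm (u ++ [b] ++ List.replicate j c) := by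
            rw [hz, ← hy, ← List.perm_cons c]
            have : (c :: y).Perm (v₁ ++ c :: v₂) := by rw [← h]; rfl
            exact ((List.perm_middle.trans (List.perm_append_comm.cons c)).symm.trans
              this.symm)
          have hzj : z = List.replicate j c :=
            List.perm_replicate.1 ((List.perm_append_left_iff _).1 hperm)
          rw [hzj, ← hy] at hz
          rw [hz] at h' ⊢
          simpa using h'
        · refine .inl (h'.trans ?_)
          have step : Conj (R x ++ W (v₂ ++ v₁ ++ [c])) (R x ++ W ([c] ++ (v₂ ++ v₁))) := by
            by_cases hc : c = a
            · subst hc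
              exact conj_rotate_write hab u _ (n + 1) fun hp => hfail ⟨rfl, hp⟩
            · have hx' : x = u ++ [b] ++ List.replicate n a ++ [a] := by
                simp [hx, List.replicate_succ']
              rw [hx']
              exact conj_rotate_of_comm (qequiv_W_singleton_R_comm (Ne.symm hc) _) _
          simpa using step
      · exact .inr h'
  exact ((key y [a] rfl).elim id id).symm

/-- The case where the writes contain a letter other than `a` after the prefix `u b`. -/
theorem conj_rotate_of_exists_ne {a b : A} (hab : b ≠ a) (u z : List A) (n : ℕ)
    (hz : ∃ c ∈ z, c ≠ a) :
    Conj (R (u ++ [b] ++ List.replicate (n + 1) a) ++ W (u ++ [b] ++ z ++ [a]))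
      (R (u ++ [b] ++ List.replicate (n + 1) a) ++ W ([a] ++ (u ++ [b] ++ z))) := by
  obtain ⟨k, d, t, hd, hs⟩ : ∃ k d t, d ≠ a ∧ u ++ [b] = List.replicate k a ++ d :: t := by
    rcases eq_replicate_or_exists_first_ne a (u ++ [b]) with ⟨k, hk⟩ | h
    · exact absurd (List.eq_of_mem_replicate (hk ▸ by simp : b ∈ List.replicate k a)) hab
    · exact h
  have hpos : 0 < z.countP (· ≠ a) := by
    obtain ⟨c, hc, hca⟩ := hz
    exact List.countP_pos_iff.2 ⟨c, hc, by simpa using hca⟩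
  have not_suffix (r : List A) : ¬ (d :: (t ++ z ++ r)) <:+ u ++ [b] ++ List.replicate n a := by
    intro h
    have := h.sublist.countP_le (p := (· ≠ a))
    rw [hs] at this
    have hcount : (d :: (t ++ z ++ r)).countP (· ≠ a) =
        (d :: t).countP (· ≠ a) + z.countP (· ≠ a) + r.countP (· ≠ a) := by
      simp only [← List.countP_append, List.cons_append]
    have hrep (m : ℕ) : (List.replicate m a).countP (· ≠ a) = 0 := by
      simp [List.countP_replicate]
    rw [hcount, List.countP_append, List.countP_append, hrep, hrep] at this
    omega
  have split : u ++ [b] ++ List.replicate (n + 1) a = u ++ [b] ++ List.replicate n a ++ [a] := by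
    simp [List.replicate_succ']
  have left := conj_rotate_read hd k (t ++ z ++ [a]) _ (not_suffix [a])
  have right := conj_rotate_read hd (k + 1) (t ++ z ++ []) _ (not_suffix [])
  have mid : Conj (R ([a] ++ (u ++ [b] ++ List.replicate n a)) ++ W (u ++ [b] ++ z ++ [a]))
      (R ([a] ++ (u ++ [b] ++ List.replicate n a)) ++ W ([a] ++ (u ++ [b] ++ z))) := by
    have := conj_rotate_write hab (a :: u) (u ++ [b] ++ z) n (by
      rw [List.cons_append, hs]
      clear left right not_suffix hs
      induction k with
      | zero => simp [hd.symm]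
      | succ k ih => simpa [List.replicate_succ] using ih)
    simpa using this
  have eleft : List.replicate k a ++ d :: (t ++ z ++ [a]) = u ++ [b] ++ z ++ [a] := by
    rw [hs]; simp
  have eright : List.replicate (k + 1) a ++ d :: (t ++ z ++ []) = [a] ++ (u ++ [b] ++ z) := by
    rw [hs]; simp [List.replicate_succ]
  rw [eleft] at left
  rw [eright] at right
  rw [split]
  exact left.symm.trans (mid.trans right)

/-- For `x, y ∈ A*` and `a ∈ A`, the queue actions `[x̄ y a]` and `[x̄ a y]` are related by
the reflexive-transitive closure of the transposition relation on `Q`. -/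
theorem stmt14 [Fintype A] [Nontrivial A] (x y : List A) (a : A) :
    Relation.ReflTransGen (fun p q : QAct A => ∃ r s : QAct A, p = r * s ∧ q = s * r)
      (cls (R x ++ W y ++ [Act.wr a])) (cls (R x ++ [Act.wr a] ++ W y)) := by
  change Conj _ _
  suffices h : Conj (R x ++ W (y ++ [a])) (R x ++ W ([a] ++ y)) by
    simpa [W_append, W] using h
  rcases eq_replicate_or_exists_last_ne a x with ⟨n, rfl⟩ | ⟨u, b, n, hab, rfl⟩
  · exact conj_rotate_of_replicate a n y
  · by_cases hp : (u ++ [b]) <+: y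
    · obtain ⟨z, rfl⟩ := hp
      cases n with
      | zero => simpa using conj_rotate_of_comm (qequiv_W_singleton_R_comm hab u) (u ++ [b] ++ z)
      | succ n =>
        by_cases hz : ∃ c ∈ z, c ≠ a
        · exact conj_rotate_of_exists_ne hab u z n hz
        · push Not at hz
          rw [List.eq_replicate_of_mem hz]
          exact conj_rotate_of_replicate_tails hab u n z.length
    · exact conj_rotate_write hab u y n hp
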